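/- Consider the equation x″ + f(t, x/t) = 0 for t ≥ t₀ ≥ 1, where f : [t₀,∞) × ℝ → ℝ is continuous with continuous partial derivative ∂f/∂t, and assume that v·f(t,v) ≥ 0 and v·[3f(t,v) + t·(∂f/∂t)(t,v)] ≤ 0 for all t ≥ t₀ and all v ≠ 0. Then every solution x of the equation is defined on [t₀,∞) and satisfies either x(t) = o(t) as t → +∞, or x(t) = x₁t + x₂ + o(1) with x₁ ≠ 0 as t → +∞. -/

import Mathlib

open Filter Set Asymptotics

/-! In the variables `u = t x′ - x`, `v = x / t` the equation is `u′ = -t f(t, v)`, `v′ = u / t²`.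
With `F(t, v) = ∫₀ᵛ f(t, s) ds`, the differential inequality says that `t³ F(t, v)` decreases in `t`
for fixed `v`, and along a solution the remaining terms in the derivative of
`V = u² / 2 + t³ F(t, v)` cancel. So `V` decreases, and since `F ≥ 0` this bounds `u`.

Then `v′ = u / t²` is integrable: `v` stays bounded on bounded intervals, so that Peano's theorem
continues the solution past any finite time, and `v` has a limit `l` at infinity. If `l ≠ 0`, then
`v` eventually has the sign of `l`, so `u` is eventually monotone and has a limit `U`. L'Hôpital's
rule then gives `t (v - l) → -U`, that is `x = l t - U + o(1)`. -/

section Calculus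

open Topology MeasureTheory

variable {E : Type*} [NormedAddCommGroup E] [NormedSpace ℝ E]

theorem antitoneOn_of_upper_barrier {s : Set ℝ} [s.OrdConnected] {φ : ℝ → ℝ} {ψ : ℝ → ℝ → ℝ}
    {ψ' : ℝ → ℝ} (hφ : ContinuousOn φ s) (hself : ∀ t ∈ s, ψ t t = φ t)
    (hle : ∀ t ∈ s, ∀ r ∈ s, t ≤ r → φ r ≤ ψ t r)
    (hψ : ∀ t ∈ s, HasDerivWithinAt (ψ t) (ψ' t) (Ici t) t) (hψ' : ∀ t ∈ s, ψ' t ≤ 0) :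
    AntitoneOn φ s := by
  intro a ha b hb hab
  have hsub : Icc a b ⊆ s := OrdConnected.out' ha hb
  refine image_le_of_liminf_slope_right_le_deriv_boundary (B := fun _ ↦ φ a) (hφ.mono hsub)
    le_rfl continuousOn_const (fun t _ ↦ hasDerivWithinAt_const t (Ici t) (φ a))
    (fun t ht r hr ↦ ?_) ⟨hab, le_rfl⟩
  have hts : t ∈ s := hsub (Ico_subset_Icc_self ht)
  refine ((hψ t hts).liminf_right_slope_le ((hψ' t hts).trans_lt hr)).mp ?_
  filter_upwards [Ioo_mem_nhdsGT ht.2] with z hz hslope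
  have hzs : z ∈ s := hsub ⟨ht.1.trans hz.1.le, hz.2.le⟩
  refine lt_of_le_of_lt ?_ hslope
  rw [slope_def_field, slope_def_field, hself t hts]
  gcongr
  · exact sub_nonneg.2 hz.1.le
  · exact hle t hts z hzs hz.1.le

theorem antitoneOn_pow_succ_mul {s : Set ℝ} (hs : Convex ℝ s) (hs_nonneg : s ⊆ Ici 0) {n : ℕ}
    {φ φ' : ℝ → ℝ} (hφ : ∀ t ∈ s, HasDerivWithinAt φ (φ' t) s t)
    (hle : ∀ t ∈ s, (n + 1) * φ t + t * φ' t ≤ 0) :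
    AntitoneOn (fun t ↦ t ^ (n + 1) * φ t) s := by
  have hderiv (t) (ht : t ∈ s) : HasDerivWithinAt (fun t ↦ t ^ (n + 1) * φ t)
      (t ^ n * ((n + 1) * φ t + t * φ' t)) s t := by
    refine ((hasDerivAt_pow (n + 1) t).hasDerivWithinAt.mul (hφ t ht)).congr_deriv ?_
    rw [Nat.add_sub_cancel]
    push_cast
    ring
  exact antitoneOn_of_hasDerivWithinAt_nonpos hs (fun t ht ↦ (hderiv t ht).continuousWithinAt)
    (fun t ht ↦ (hderiv t (interior_subset ht)).mono interior_subset)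
    fun t ht ↦ mul_nonpos_of_nonneg_of_nonpos (pow_nonneg (hs_nonneg (interior_subset ht)) n)
      (hle t (interior_subset ht))

theorem intervalIntegral_zero_nonneg_of_mul_nonneg {k : ℝ → ℝ} (hk : ∀ s ≠ 0, 0 ≤ s * k s)
    (w : ℝ) : 0 ≤ ∫ s in (0 : ℝ)..w, k s := by
  rcases le_total 0 w with hw | hw
  · rw [intervalIntegral.integral_of_le hw]
    exact setIntegral_nonneg measurableSet_Ioc fun s hs ↦
      nonneg_of_mul_nonneg_right (hk s hs.1.ne') hs.1
  · rw [intervalIntegral.integral_symm, neg_nonneg, intervalIntegral.integral_of_le hw,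
      integral_Ioc_eq_integral_Ioo]
    exact setIntegral_nonpos measurableSet_Ioo fun s hs ↦
      nonpos_of_mul_nonneg_right (hk s hs.2.ne) hs.2

theorem antitoneOn_intervalIntegral_zero {ι : Type*} [Preorder ι] {S : Set ι} {g : ι → ℝ → ℝ}
    (hg : ∀ t ∈ S, Continuous (g t)) (hanti : ∀ w ≠ 0, AntitoneOn (fun t ↦ w * g t w) S) (w : ℝ) :
    AntitoneOn (fun t ↦ ∫ s in (0 : ℝ)..w, g t s) S := by
  intro a ha b hb hab
  have hnonneg := intervalIntegral_zero_nonneg_of_mul_nonneg (k := fun s ↦ g a s - g b s)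
    (fun s hs ↦ by simpa only [mul_sub] using sub_nonneg.2 (hanti s hs ha hb hab)) w
  rwa [intervalIntegral.integral_sub ((hg a ha).intervalIntegrable _ _)
    ((hg b hb).intervalIntegrable _ _), sub_nonneg] at hnonneg

theorem exists_tendsto_atTop_of_antitoneOn_Ici {φ : ℝ → ℝ} {N c : ℝ} (hφ : AntitoneOn φ (Ici N))
    (hc : ∀ t ∈ Ici N, c ≤ φ t) : ∃ l, Tendsto φ atTop (𝓝 l) := by
  have hbdd : BddBelow (range fun t : Ici N ↦ φ t) := ⟨c, forall_mem_range.2 fun t ↦ hc t t.2⟩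
  exact ⟨_, tendsto_comp_val_Ici_atTop.1 (tendsto_atTop_ciInf (antitoneOn_iff_antitone.1 hφ) hbdd)⟩

theorem exists_tendsto_nhdsLT_of_norm_deriv_le [CompleteSpace E] {z z' : ℝ → E} {a T C : ℝ}
    (haT : a < T) (hz : ∀ t ∈ Ico a T, HasDerivAt z (z' t) t) (hC : ∀ t ∈ Ico a T, ‖z' t‖ ≤ C) :
    ∃ l, Tendsto z (𝓝[<] T) (𝓝 l) := by
  have hlip : LipschitzOnWith C.toNNReal z (Ico a T) :=
    (convex_Ico a T).lipschitzOnWith_of_nnnorm_hasDerivWithin_le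
      (fun t ht ↦ (hz t ht).hasDerivWithinAt)
      fun t ht ↦ NNReal.coe_le_coe.1 ((hC t ht).trans (Real.le_coe_toNNReal C))
  have hcauchy : Cauchy (𝓝[<] T) := cauchy_nhds.mono nhdsWithin_le_nhds
  exact CompleteSpace.complete (hcauchy.map_of_le hlip.uniformContinuousOn
    (le_principal_iff.2 (Ico_mem_nhdsLT haT)))

theorem norm_le_of_norm_deriv_le {z z' : ℝ → E} {a T C : ℝ}
    (hz : ∀ t ∈ Ico a T, HasDerivAt z (z' t) t) (hC : ∀ t ∈ Ico a T, ‖z' t‖ ≤ C) {t : ℝ}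
    (ht : t ∈ Ico a T) : ‖z t‖ ≤ ‖z a‖ + C * (T - a) := by
  have ha : a ∈ Ico a T := ⟨le_rfl, ht.1.trans_lt ht.2⟩
  have hC_nonneg : 0 ≤ C := (norm_nonneg _).trans (hC a ha)
  calc ‖z t‖ ≤ ‖z a‖ + ‖z t - z a‖ := norm_le_norm_add_norm_sub' _ _
    _ ≤ ‖z a‖ + C * ‖t - a‖ := by
      gcongr
      exact (convex_Ico a T).norm_image_sub_le_of_norm_hasDerivWithin_le
        (fun r hr ↦ (hz r hr).hasDerivWithinAt) hC ha ht
    _ ≤ ‖z a‖ + C * (T - a) := by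
      rw [Real.norm_of_nonneg (sub_nonneg.2 ht.1)]
      gcongr
      exact ht.2.le

theorem hasDerivAt_ite_lt {x x' y : ℝ → E} {y' : E} {T : ℝ}
    (hx : ∀ᶠ t in 𝓝[<] T, HasDerivAt x (x' t) t) (hy : HasDerivAt y y' T)
    (hlim : Tendsto x (𝓝[<] T) (𝓝 (y T))) (hlim' : Tendsto x' (𝓝[<] T) (𝓝 y')) :
    HasDerivAt (fun t ↦ if t < T then x t else y t) y' T := by
  set w : ℝ → E := fun t ↦ if t < T then x t else y t
  have hwT : w T = y T := if_neg (lt_irrefl T)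
  have hright : HasDerivWithinAt w y' (Ici T) T :=
    hy.hasDerivWithinAt.congr (fun t ht ↦ if_neg (not_lt.2 ht)) hwT
  have hderiv : ∀ᶠ t in 𝓝[<] T, HasDerivAt w (x' t) t := by
    filter_upwards [hx, self_mem_nhdsWithin] with t hxt ht
    exact hxt.congr_of_eventuallyEq (eventually_of_mem (Iio_mem_nhds ht) fun s hs ↦ if_pos hs)
  have hcont : ContinuousWithinAt w (Iio T) T := by
    rw [ContinuousWithinAt, hwT]
    exact hlim.congr' (eventually_of_mem self_mem_nhdsWithin fun s hs ↦ (if_pos hs).symm)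
  have hleft : HasDerivWithinAt w y' (Iic T) T :=
    hasDerivWithinAt_Iic_of_tendsto_deriv
      (fun t ht ↦ (ht.1 : HasDerivAt w (x' t) t).differentiableAt.differentiableWithinAt)
      (hcont.mono inter_subset_right) (inter_mem hderiv self_mem_nhdsWithin)
      (hlim'.congr' (hderiv.mono fun t ht ↦ ht.deriv.symm))
  simpa using hleft.union hright

theorem exists_tendsto_atTop_of_norm_deriv_le_div_sq [CompleteSpace E] {v v' : ℝ → E} {a C : ℝ}
    (ha : 0 < a) (hv : ∀ t ∈ Ici a, HasDerivAt v (v' t) t)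
    (hC : ∀ t ∈ Ici a, ‖v' t‖ ≤ C / t ^ 2) : ∃ l, Tendsto v atTop (𝓝 l) := by
  -- The substitution `t = -r⁻¹` moves infinity to `0⁻` and makes the derivative bounded.
  have hmem {r : ℝ} (hr : r ∈ Ico (-a⁻¹) 0) : -r⁻¹ ∈ Ici a := by
    rw [mem_Ici, ← inv_neg, le_inv_comm₀ ha (neg_pos.2 hr.2)]
    exact neg_le.1 hr.1
  obtain ⟨l, hl⟩ := exists_tendsto_nhdsLT_of_norm_deriv_le (z := fun r ↦ v (-r⁻¹))
    (z' := fun r ↦ (r ^ 2)⁻¹ • v' (-r⁻¹)) (C := C) (neg_neg_of_pos (inv_pos.2 ha))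
    (fun r hr ↦ (hv _ (hmem hr)).scomp r
      ((hasDerivAt_inv hr.2.ne).neg.congr_deriv (neg_neg _)))
    fun r hr ↦ by
      have hr0 : r ≠ 0 := hr.2.ne
      have hle := hC _ (hmem hr)
      rw [norm_smul, norm_inv, norm_pow, Real.norm_eq_abs, sq_abs]
      calc (r ^ 2)⁻¹ * ‖v' (-r⁻¹)‖ ≤ (r ^ 2)⁻¹ * (C / (-r⁻¹) ^ 2) := by gcongr
        _ = C := by field_simp
  have hneg_inv : Tendsto (fun t : ℝ ↦ -t⁻¹) atTop (𝓝[<] 0) := by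
    refine tendsto_nhdsWithin_iff.2 ⟨by simpa using tendsto_inv_atTop_zero.neg (G := ℝ), ?_⟩
    filter_upwards [eventually_gt_atTop 0] with t ht using neg_neg_of_pos (inv_pos.2 ht)
  exact ⟨l, (hl.comp hneg_inv).congr fun t ↦ by simp⟩

theorem tendsto_mul_sub_of_hasDerivAt_div_sq {u v : ℝ → ℝ} {U l : ℝ}
    (hv : ∀ᶠ t in atTop, HasDerivAt v (u t / t ^ 2) t) (hvl : Tendsto v atTop (𝓝 l))
    (hu : Tendsto u atTop (𝓝 U)) : Tendsto (fun t ↦ t * (v t - l)) atTop (𝓝 (-U)) := by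
  have hlim := HasDerivAt.lhopital_zero_atTop (hv.mono fun t ht ↦ ht.sub_const l)
    ((eventually_ne_atTop 0).mono fun t ht ↦ hasDerivAt_inv ht)
    ((eventually_ne_atTop 0).mono fun t ht ↦ neg_ne_zero.2 (inv_ne_zero (pow_ne_zero 2 ht)))
    (by simpa using hvl.sub_const l) tendsto_inv_atTop_zero
    (hu.neg.congr' ((eventually_ne_atTop 0).mono fun t ht ↦ by field_simp))
  exact hlim.congr fun t ↦ by rw [div_inv_eq_mul, mul_comm]

end Calculus

section Peano

open Topology MeasureTheory
open scoped NNReal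

theorem isCompact_setOf_lipschitzWith_apply_eq {X Y : Type*} [PseudoMetricSpace X] [MetricSpace Y]
    [ProperSpace Y] (M : ℝ≥0) (x₀ : X) (y₀ : Y) :
    IsCompact {f : C(X, Y) | LipschitzWith M f ∧ f x₀ = y₀} := by
  refine ArzelaAscoli.isCompact_of_equicontinuous _ ?_
    (LipschitzWith.uniformEquicontinuous _ M fun f ↦ f.2.1).equicontinuous
  have himage : ContinuousMap.toFun '' {f : C(X, Y) | LipschitzWith M f ∧ f x₀ = y₀} =
      {f : X → Y | LipschitzWith M f} ∩ {f | f x₀ = y₀} := by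
    ext f
    exact ⟨by rintro ⟨g, hg, rfl⟩; exact hg, fun hf ↦ ⟨⟨f, hf.1.continuous⟩, hf, rfl⟩⟩
  rw [himage]
  refine (isCompact_univ_pi fun x ↦ isCompact_closedBall y₀ (M * dist x x₀)).of_isClosed_subset
    ((isClosed_setOfPred_lipschitzWith M).inter
      (isClosed_eq (continuous_apply x₀) continuous_const)) ?_
  rintro f ⟨hf, rfl⟩ x -
  exact hf.dist_le_mul x x₀

variable {E : Type*} [NormedAddCommGroup E] [NormedSpace ℝ E]

/-- Successive approximations to Tonelli's delay equation `w′(t) = G(t, w(t - δ))` with `w = z₀`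
on `(-∞, T]`, in integral form. The `n`-th one already solves the equation up to time
`T + n * δ`, because the delayed argument only sees values that no longer change. -/
noncomputable def delayIterate (G : ℝ → E → E) (T δ : ℝ) (z₀ : E) : ℕ → ℝ → E
  | 0, _ => z₀
  | n + 1, t => z₀ + ∫ s in T..max t T, G s (delayIterate G T δ z₀ n (s - δ))

theorem delayIterate_succ_of_le_add_mul (G : ℝ → E → E) (T : ℝ) {δ : ℝ} (hδ : 0 ≤ δ) (z₀ : E)
    (n : ℕ) {t : ℝ} (ht : t ≤ T + n * δ) :
    delayIterate G T δ z₀ (n + 1) t = delayIterate G T δ z₀ n t := by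
  induction n generalizing t with
  | zero =>
    have htT : t ≤ T := by simpa using ht
    simp [delayIterate, max_eq_right htT]
  | succ n ih =>
    rw [delayIterate, delayIterate]
    congr 1
    refine intervalIntegral.integral_congr fun s hs ↦ ?_
    rw [uIcc_of_le (le_max_right _ _)] at hs
    have hs' : s ≤ T + (n + 1 : ℕ) * δ :=
      hs.2.trans (max_le ht (le_add_of_nonneg_right (by positivity)))
    rw [ih (by push_cast at hs'; linarith)]

variable {G : ℝ → E → E} (hG : Continuous (Function.uncurry G)) {M : ℝ≥0}
  (hM : ∀ s p, ‖G s p‖ ≤ M)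

include hG hM

theorem lipschitzWith_delayIterate (T δ : ℝ) (z₀ : E) (n : ℕ) :
    LipschitzWith M (delayIterate G T δ z₀ n) := by
  induction n with
  | zero => exact (LipschitzWith.const z₀).weaken zero_le
  | succ n ih =>
    have hcont : Continuous fun s ↦ G s (delayIterate G T δ z₀ n (s - δ)) :=
      hG.comp (continuous_id.prodMk (ih.continuous.comp (continuous_sub_right δ)))
    refine LipschitzWith.of_dist_le_mul fun a b ↦ ?_
    calc dist (delayIterate G T δ z₀ (n + 1) a) (delayIterate G T δ z₀ (n + 1) b)
        = ‖∫ s in max b T..max a T, G s (delayIterate G T δ z₀ n (s - δ))‖ := by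
          rw [delayIterate, delayIterate, dist_add_left, dist_eq_norm,
            intervalIntegral.integral_interval_sub_left (hcont.intervalIntegrable _ _)
              (hcont.intervalIntegrable _ _)]
      _ ≤ M * |max a T - max b T| :=
          intervalIntegral.norm_integral_le_of_norm_le_const fun s _ ↦ hM _ _
      _ ≤ M * dist a b := by
          gcongr
          exact abs_max_sub_max_le_abs a b T

theorem exists_lipschitzWith_eq_integral_delay (T b : ℝ) {δ : ℝ} (hδ : 0 < δ) (z₀ : E) :
    ∃ w : ℝ → E, LipschitzWith M w ∧ w T = z₀ ∧
      ∀ t ∈ Icc T b, w t = z₀ + ∫ s in T..t, G s (w (s - δ)) := by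
  obtain ⟨n, hn⟩ := exists_nat_ge ((b - T) / δ)
  rw [div_le_iff₀ hδ] at hn
  refine ⟨delayIterate G T δ z₀ n, lipschitzWith_delayIterate hG hM T δ z₀ n, ?_, fun t ht ↦ ?_⟩
  · cases n <;> simp [delayIterate]
  · rw [← delayIterate_succ_of_le_add_mul G T hδ.le z₀ n (by linarith [ht.2]), delayIterate,
      max_eq_left ht.1]

theorem tendsto_integral_delay {w : ℕ → ℝ → E} {K : ℝ≥0} (hw : ∀ n, LipschitzWith K (w n))
    {δ : ℕ → ℝ} (hδ : Tendsto δ atTop (𝓝 0)) {z : ℝ → E} (hz : ∀ t, Tendsto (w · t) atTop (𝓝 (z t)))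
    (a b : ℝ) :
    Tendsto (fun n ↦ ∫ s in a..b, G s (w n (s - δ n))) atTop (𝓝 (∫ s in a..b, G s (z s))) := by
  have hdelay (t : ℝ) : Tendsto (fun n ↦ w n (t - δ n)) atTop (𝓝 (z t)) := by
    refine tendsto_of_tendsto_of_dist (hz t) (squeeze_zero (fun _ ↦ dist_nonneg)
      (fun n ↦ (hw n).dist_le_mul _ _) ?_)
    simpa using hδ.abs.const_mul (K : ℝ)
  refine intervalIntegral.tendsto_integral_filter_of_dominated_convergence (fun _ ↦ (M : ℝ))
    (.of_forall fun n ↦ ?_) (.of_forall fun n ↦ .of_forall fun s _ ↦ hM _ _)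
    intervalIntegrable_const (.of_forall fun s _ ↦ ?_)
  · exact (hG.comp (continuous_id.prodMk ((hw n).continuous.comp
      (continuous_sub_right (δ n))))).aestronglyMeasurable
  · exact (hG.tendsto (s, z s)).comp (tendsto_const_nhds.prodMk_nhds (hdelay s))

theorem exists_continuous_eq_integral [ProperSpace E] (T b : ℝ) (z₀ : E) :
    ∃ z : ℝ → E, Continuous z ∧ ∀ t ∈ Icc T b, z t = z₀ + ∫ s in T..t, G s (z s) := by
  choose w hw_lip hwT hw using fun n : ℕ ↦
    exists_lipschitzWith_eq_integral_delay hG hM T b (Nat.one_div_pos_of_nat (α := ℝ) (n := n)) z₀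
  obtain ⟨z, -, φ, hφ, hlim⟩ := (isCompact_setOf_lipschitzWith_apply_eq M T z₀).tendsto_subseq
    (x := fun n ↦ ⟨w n, (hw_lip n).continuous⟩) fun n ↦ ⟨hw_lip n, hwT n⟩
  have hpt (t : ℝ) : Tendsto (fun n ↦ w (φ n) t) atTop (𝓝 (z t)) :=
    ((continuous_eval_const t).tendsto z).comp hlim
  refine ⟨z, z.continuous, fun t ht ↦ tendsto_nhds_unique (hpt t) ?_⟩
  simp_rw [hw _ t ht]
  exact (tendsto_integral_delay hG hM (fun n ↦ hw_lip (φ n))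
    (tendsto_one_div_add_atTop_nhds_zero_nat.comp hφ.tendsto_atTop) hpt T t).const_add z₀

theorem exists_hasDerivAt_of_bounded [ProperSpace E] (T b : ℝ) (z₀ : E) :
    ∃ z : ℝ → E, z T = z₀ ∧ ∀ t ∈ Icc T b, HasDerivAt z (G t (z t)) t := by
  obtain ⟨z, hz_cont, hz⟩ := exists_continuous_eq_integral hG hM T b z₀
  have hGz : Continuous fun s ↦ G s (z s) := hG.comp (continuous_id.prodMk hz_cont)
  refine ⟨fun t ↦ z₀ + ∫ s in T..t, G s (z s), by simp, fun t ht ↦ ?_⟩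
  simp only [← hz t ht]
  exact (hGz.integral_hasStrictDerivAt T t).hasDerivAt.const_add z₀

omit hG hM

theorem peano_exists_hasDerivAt_Ico [ProperSpace E] {U : Set (ℝ × E)} (hU : IsOpen U)
    (hGU : ContinuousOn (Function.uncurry G) U) {T : ℝ} {z₀ : E} (hz₀ : (T, z₀) ∈ U) :
    ∃ ε > 0, ∃ z : ℝ → E, z T = z₀ ∧ ∀ t ∈ Ico T (T + ε), HasDerivAt z (G t (z t)) t := by
  obtain ⟨K, hK, hTK, hKU⟩ := exists_compact_subset hU hz₀
  obtain ⟨φ, hφ_one, hφ_cpt, hφU, -⟩ :=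
    exists_continuousMap_one_of_isCompact_subset_isOpen hK hU hKU
  have hcont : Continuous fun p ↦ φ p • Function.uncurry G p :=
    (φ.continuous.continuousOn.smul hGU).continuous_of_tsupport_subset hU
      ((tsupport_smul_subset_left _ _).trans hφU)
  obtain ⟨C, hC⟩ := hcont.bounded_above_of_compact_support (HasCompactSupport.smul_right hφ_cpt)
  obtain ⟨z, hzT, hz⟩ := exists_hasDerivAt_of_bounded (G := fun t p ↦ φ (t, p) • G t p) hcont
    (M := C.toNNReal) (fun s p ↦ (hC (s, p)).trans (Real.le_coe_toNNReal C)) T (T + 1) z₀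
  have hnear : ∀ᶠ t in 𝓝 T, (t, z t) ∈ K := by
    have hzcont : ContinuousAt z T := (hz T ⟨le_rfl, by simp⟩).continuousAt
    refine (continuousAt_id.prodMk hzcont).eventually_mem ?_
    simpa only [id, hzT] using mem_interior_iff_mem_nhds.1 hTK
  obtain ⟨ε, hε, hball⟩ := Metric.eventually_nhds_iff.1 hnear
  refine ⟨min ε 1, by positivity, z, hzT, fun t ht ↦ ?_⟩
  have htT : t - T < min ε 1 := by linarith [ht.2]
  have hzt := hz t ⟨ht.1, by linarith [min_le_right ε 1]⟩
  have htK : (t, z t) ∈ K := hball (by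
    rw [Real.dist_eq, abs_of_nonneg (sub_nonneg.2 ht.1)]
    exact htT.trans_le (min_le_left ε 1))
  simpa [hφ_one htK] using hzt

theorem exists_hasDerivAt_extension_of_bounded [ProperSpace E] {a T R : ℝ} (haT : a < T)
    (hG : ContinuousOn (Function.uncurry G) (Ioi a ×ˢ univ)) {z : ℝ → E}
    (hz : ∀ t ∈ Ico a T, HasDerivAt z (G t (z t)) t) (hR : ∀ t ∈ Ico a T, ‖z t‖ ≤ R) :
    ∃ ε > 0, ∃ w : ℝ → E, EqOn w z (Iio T) ∧
      ∀ t ∈ Ico a (T + ε), HasDerivAt w (G t (w t)) t := by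
  obtain ⟨b, hab, hbT⟩ := exists_between haT
  have hsub : Ico b T ⊆ Ico a T := Ico_subset_Ico_left hab.le
  have hIcc : Icc b T ⊆ Ioi a := fun t ht ↦ hab.trans_le ht.1
  have hcpt : IsCompact (Icc b T ×ˢ Metric.closedBall (0 : E) R) :=
    isCompact_Icc.prod (isCompact_closedBall 0 R)
  obtain ⟨C, hC⟩ := hcpt.exists_bound_of_continuousOn (hG.mono (prod_mono hIcc (subset_univ _)))
  obtain ⟨l, hl⟩ := exists_tendsto_nhdsLT_of_norm_deriv_le hbT (fun t ht ↦ hz t (hsub ht))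
    fun t ht ↦ hC (t, z t) ⟨Ico_subset_Icc_self ht, mem_closedBall_zero_iff.2 (hR t (hsub ht))⟩
  have hU : IsOpen (Ioi a ×ˢ (univ : Set E)) := isOpen_Ioi.prod isOpen_univ
  have hTl : (T, l) ∈ Ioi a ×ˢ (univ : Set E) := ⟨haT, trivial⟩
  obtain ⟨ε, hε, y, rfl, hy⟩ := peano_exists_hasDerivAt_Ico hU hG hTl
  have hGl : Tendsto (fun t ↦ G t (z t)) (𝓝[<] T) (𝓝 (G T (y T))) :=
    (hG.continuousAt (hU.mem_nhds hTl)).tendsto.comp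
      ((tendsto_id.mono_left nhdsWithin_le_nhds).prodMk_nhds hl)
  refine ⟨ε, hε, fun t ↦ if t < T then z t else y t, fun t ht ↦ if_pos ht, fun t ht ↦ ?_⟩
  rcases lt_trichotomy t T with htT | rfl | hTt
  · simp only [if_pos htT]
    exact (hz t ⟨ht.1, htT⟩).congr_of_eventuallyEq
      (eventually_of_mem (Iio_mem_nhds htT) fun s hs ↦ if_pos hs)
  · simp only [lt_irrefl, if_false]
    exact hasDerivAt_ite_lt (eventually_of_mem (Ico_mem_nhdsLT haT) hz)
      (hy t ⟨le_rfl, ht.2⟩) hl hGl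
  · simp only [if_neg hTt.not_gt]
    exact (hy t ⟨hTt.le, ht.2⟩).congr_of_eventuallyEq
      (eventually_of_mem (Ioi_mem_nhds hTt) fun s hs ↦ if_neg (lt_asymm hs))

end Peano

section System

open Topology

/-- The primitive `F(t, v) = ∫₀ᵛ f(t, s) ds` of the nonlinearity in its second variable. -/
noncomputable def potential (f : ℝ → ℝ → ℝ) (t v : ℝ) : ℝ := ∫ s in (0 : ℝ)..v, f t s

/-- The function `x`, with derivative `x'`, solves `x″ + f(t, x/t) = 0` at every time in `s`. The
derivatives are two-sided, also at endpoints of `s`. -/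
structure IsSolutionOn (f : ℝ → ℝ → ℝ) (x x' : ℝ → ℝ) (s : Set ℝ) : Prop where
  hasDerivAt : ∀ t ∈ s, HasDerivAt x (x' t) t
  hasDerivAt_deriv : ∀ t ∈ s, HasDerivAt x' (-f t (x t / t)) t

/-- The curve `(u, v)` solves the first-order system `u′ = -t f(t, v)`, `v′ = u / t²` at every
time in `s`. -/
structure IsSystemSolutionOn (f : ℝ → ℝ → ℝ) (u v : ℝ → ℝ) (s : Set ℝ) : Prop where
  hasDerivAt_fst : ∀ t ∈ s, HasDerivAt u (-t * f t (v t)) t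
  hasDerivAt_snd : ∀ t ∈ s, HasDerivAt v (u t / t ^ 2) t

/-- The Lyapunov function `u² / 2 + t³ F(t, v)` of the system `u′ = -t f(t, v)`, `v′ = u / t²`,
as a function of time along the curve `(u, v)`. -/
noncomputable def lyapunov (f : ℝ → ℝ → ℝ) (u v : ℝ → ℝ) (t : ℝ) : ℝ :=
  u t ^ 2 / 2 + t ^ 3 * potential f t (v t)

variable {f : ℝ → ℝ → ℝ} {s : Set ℝ}

theorem continuous_of_continuousOn_uncurry (hf : ContinuousOn (Function.uncurry f) (s ×ˢ univ))
    {t : ℝ} (ht : t ∈ s) : Continuous (f t) :=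
  hf.comp_continuous (Continuous.prodMk_right t) fun _ ↦ ⟨ht, trivial⟩

theorem hasDerivAt_potential {t : ℝ} (hf : Continuous (f t)) (v : ℝ) :
    HasDerivAt (potential f t) (f t v) v :=
  (hf.integral_hasStrictDerivAt 0 v).hasDerivAt

theorem continuousOn_potential (hf : ContinuousOn (Function.uncurry f) (s ×ˢ univ)) :
    ContinuousOn (Function.uncurry (potential f)) (s ×ˢ univ) := by
  rw [continuousOn_iff_continuous_domRestrict]
  refine intervalIntegral.continuous_parametric_intervalIntegral_of_continuous
    (f := fun (p : s ×ˢ (univ : Set ℝ)) r ↦ f p.1.1 r) ?_ (by fun_prop)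
  exact hf.comp_continuous (f := fun q : (s ×ˢ (univ : Set ℝ)) × ℝ ↦ (q.1.1.1, q.2)) (by fun_prop)
    fun q ↦ ⟨q.1.2.1, trivial⟩

theorem antitoneOn_pow_three_mul_potential {ft : ℝ → ℝ → ℝ} (hs : Convex ℝ s)
    (hs_nonneg : s ⊆ Ici 0) (hf : ContinuousOn (Function.uncurry f) (s ×ˢ univ))
    (hft : ∀ v, ∀ t ∈ s, HasDerivWithinAt (f · v) (ft t v) s t)
    (hsign : ∀ t ∈ s, ∀ v ≠ 0, v * (3 * f t v + t * ft t v) ≤ 0) (w : ℝ) :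
    AntitoneOn (fun t ↦ t ^ 3 * potential f t w) s := by
  simp only [potential, ← intervalIntegral.integral_const_mul]
  refine antitoneOn_intervalIntegral_zero
    (fun t ht ↦ (continuous_of_continuousOn_uncurry hf ht).const_mul _) (fun v hv ↦ ?_) w
  simp only [mul_left_comm v]
  refine antitoneOn_pow_succ_mul hs hs_nonneg (fun t ht ↦ (hft v t ht).const_mul v) fun t ht ↦ ?_
  calc ((2 : ℕ) + 1) * (v * f t v) + t * (v * ft t v)
      = v * (3 * f t v + t * ft t v) := by push_cast; ring
    _ ≤ 0 := hsign t ht v hv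

namespace IsSystemSolutionOn

variable {u v : ℝ → ℝ}

theorem antitoneOn_lyapunov [s.OrdConnected] (h : IsSystemSolutionOn f u v s) (hs : 0 ∉ s)
    (hf : ContinuousOn (Function.uncurry f) (s ×ˢ univ))
    (hanti : ∀ w, AntitoneOn (fun t ↦ t ^ 3 * potential f t w) s) :
    AntitoneOn (lyapunov f u v) s := by
  have hu : ContinuousOn u s := fun t ht ↦ (h.hasDerivAt_fst t ht).continuousAt.continuousWithinAt
  have hv : ContinuousOn v s := fun t ht ↦ (h.hasDerivAt_snd t ht).continuousAt.continuousWithinAt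
  have hpot : ContinuousOn (fun t ↦ potential f t (v t)) s :=
    (continuousOn_potential hf).comp (continuousOn_id.prodMk hv) fun t ht ↦ ⟨ht, trivial⟩
  -- Freezing the explicit time in the potential at `t` gives a barrier with derivative zero.
  refine antitoneOn_of_upper_barrier (ψ := fun t r ↦ u r ^ 2 / 2 + t ^ 3 * potential f t (v r))
    (ψ' := 0) (((hu.pow 2).div_const 2).add ((continuousOn_id.pow 3).mul hpot)) (fun _ _ ↦ rfl)
    (fun t ht r hr htr ↦ add_le_add_right (hanti (v r) ht hr htr) _)
    (fun t ht ↦ ?_) fun _ _ ↦ le_rfl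
  have : t ≠ 0 := ne_of_mem_of_not_mem ht hs
  have hderiv := (((h.hasDerivAt_fst t ht).pow 2).div_const 2).add
    (((hasDerivAt_potential (continuous_of_continuousOn_uncurry hf ht) (v t)).comp t
      (h.hasDerivAt_snd t ht)).const_mul (t ^ 3))
  refine (hderiv.congr_deriv ?_).hasDerivWithinAt
  simp only [Pi.zero_apply]
  field_simp
  ring

theorem isSolutionOn (h : IsSystemSolutionOn f u v s) (hs : 0 ∉ s) :
    IsSolutionOn f (fun t ↦ t * v t) (fun t ↦ v t + u t / t) s where
  hasDerivAt t ht := by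
    have : t ≠ 0 := ne_of_mem_of_not_mem ht hs
    refine ((hasDerivAt_id' t).mul (h.hasDerivAt_snd t ht)).congr_deriv ?_
    field_simp
  hasDerivAt_deriv t ht := by
    have ht0 : t ≠ 0 := ne_of_mem_of_not_mem ht hs
    refine ((h.hasDerivAt_snd t ht).add
      ((h.hasDerivAt_fst t ht).div (hasDerivAt_id' t) ht0)).congr_deriv ?_
    rw [mul_div_cancel_left₀ (v t) ht0]
    field_simp
    ring

theorem exists_extension_of_bounded {t₀ T R : ℝ} (ht₀ : 0 ≤ t₀) (hT : t₀ < T)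
    (h : IsSystemSolutionOn f u v (Ico t₀ T))
    (hf : ContinuousOn (Function.uncurry f) (Ioi t₀ ×ˢ univ))
    (hu : ∀ t ∈ Ico t₀ T, |u t| ≤ R) (hv : ∀ t ∈ Ico t₀ T, |v t| ≤ R) :
    ∃ ε > 0, ∃ u₁ v₁ : ℝ → ℝ, EqOn u₁ u (Iio T) ∧ EqOn v₁ v (Iio T) ∧
      IsSystemSolutionOn f u₁ v₁ (Ico t₀ (T + ε)) := by
  have hG : ContinuousOn (Function.uncurry fun (t : ℝ) (p : ℝ × ℝ) ↦ (-t * f t p.2, p.1 / t ^ 2))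
      (Ioi t₀ ×ˢ univ) := by
    refine (continuousOn_fst.neg.mul ?_).prodMk
      (continuous_snd.fst.continuousOn.div (continuousOn_fst.pow 2) ?_)
    · exact hf.comp (continuous_fst.prodMk continuous_snd.snd).continuousOn
        fun p hp ↦ ⟨hp.1, trivial⟩
    · exact fun p hp ↦ pow_ne_zero 2 (ht₀.trans_lt hp.1).ne'
  obtain ⟨ε, hε, w, hw_eq, hw⟩ := exists_hasDerivAt_extension_of_bounded hT hG
    (z := fun t ↦ (u t, v t)) (R := R)
    (fun t ht ↦ (h.hasDerivAt_fst t ht).prodMk (h.hasDerivAt_snd t ht))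
    fun t ht ↦ max_le (hu t ht) (hv t ht)
  exact ⟨ε, hε, fun t ↦ (w t).1, fun t ↦ (w t).2, fun t ht ↦ congrArg Prod.fst (hw_eq ht),
    fun t ht ↦ congrArg Prod.snd (hw_eq ht), fun t ht ↦ (hw t ht).fst, fun t ht ↦ (hw t ht).snd⟩

theorem exists_tendsto_snd {t₀ C : ℝ} (ht₀ : 0 < t₀) (h : IsSystemSolutionOn f u v (Ici t₀))
    (hu : ∀ t ∈ Ici t₀, |u t| ≤ C) : ∃ l, Tendsto v atTop (𝓝 l) := by
  refine exists_tendsto_atTop_of_norm_deriv_le_div_sq (C := C) ht₀ h.hasDerivAt_snd fun t ht ↦ ?_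
  rw [norm_div, Real.norm_eq_abs, Real.norm_of_nonneg (sq_nonneg t)]
  gcongr
  exact hu t ht

theorem exists_tendsto_fst {t₀ C l : ℝ} (ht₀ : 0 ≤ t₀) (h : IsSystemSolutionOn f u v (Ici t₀))
    (hsign : ∀ t ∈ Ici t₀, ∀ w ≠ 0, 0 ≤ w * f t w) (hu : ∀ t ∈ Ici t₀, |u t| ≤ C)
    (hv : Tendsto v atTop (𝓝 l)) (hl : l ≠ 0) : ∃ U, Tendsto u atTop (𝓝 U) := by
  have hev : ∀ᶠ t in atTop, 0 < l * v t ∧ t₀ ≤ t :=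
    ((hv.const_mul l).eventually_const_lt (mul_self_pos.2 hl)).and (eventually_ge_atTop t₀)
  obtain ⟨N, hN⟩ := eventually_atTop.1 hev
  have hderiv (t) (ht : t ∈ Ici N) : HasDerivAt (fun t ↦ l * u t) (l * (-t * f t (v t))) t :=
    (h.hasDerivAt_fst t (hN t ht).2).const_mul l
  have hderiv_nonpos (t) (ht : t ∈ Ici N) : l * (-t * f t (v t)) ≤ 0 := by
    obtain ⟨hlv, ht₀t⟩ := hN t ht
    have hvf : 0 ≤ v t * f t (v t) := hsign t ht₀t (v t) (right_ne_zero_of_mul hlv.ne')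
    have hlf : 0 ≤ l * f t (v t) := by
      have hv0 : v t ≠ 0 := right_ne_zero_of_mul hlv.ne'
      refine nonneg_of_mul_nonneg_right (a := v t ^ 2) ?_ (by positivity)
      exact (mul_nonneg hlv.le hvf).trans_eq (by ring)
    have := mul_nonneg (ht₀.trans ht₀t) hlf
    linarith
  have hanti : AntitoneOn (fun t ↦ l * u t) (Ici N) :=
    antitoneOn_of_hasDerivWithinAt_nonpos (convex_Ici N)
      (fun t ht ↦ (hderiv t ht).continuousAt.continuousWithinAt)
      (fun t ht ↦ (hderiv t (interior_subset ht)).hasDerivWithinAt)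
      fun t ht ↦ hderiv_nonpos t (interior_subset ht)
  have hbound (t) (ht : t ∈ Ici N) : -(|l| * C) ≤ l * u t := by
    refine neg_le_of_abs_le ?_
    rw [abs_mul]
    gcongr
    exact hu t (hN t ht).2
  obtain ⟨U, hU⟩ := exists_tendsto_atTop_of_antitoneOn_Ici hanti hbound
  exact ⟨l⁻¹ * U, (hU.const_mul l⁻¹).congr fun t ↦ inv_mul_cancel_left₀ hl (u t)⟩

section Lyapunov

variable {t₀ : ℝ} (ht₀ : 0 < t₀) (hf : ContinuousOn (Function.uncurry f) (Ici t₀ ×ˢ univ))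
  (hsign : ∀ t ∈ Ici t₀, ∀ w ≠ 0, 0 ≤ w * f t w)
  (hanti : ∀ w, AntitoneOn (fun t ↦ t ^ 3 * potential f t w) (Ici t₀))

include ht₀ hf hsign hanti

theorem abs_fst_le [s.OrdConnected] (h : IsSystemSolutionOn f u v s) (hs : s ⊆ Ici t₀)
    (ht₀s : t₀ ∈ s) {t : ℝ} (ht : t ∈ s) : |u t| ≤ √(2 * lyapunov f u v t₀) := by
  have hdecr : lyapunov f u v t ≤ lyapunov f u v t₀ :=
    h.antitoneOn_lyapunov (fun h0 ↦ ht₀.not_ge (hs h0)) (hf.mono (prod_mono_left hs))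
      (fun w ↦ (hanti w).mono hs) ht₀s ht (hs ht)
  have hpot : 0 ≤ potential f t (v t) :=
    intervalIntegral_zero_nonneg_of_mul_nonneg (hsign t (hs ht)) (v t)
  have hle : u t ^ 2 / 2 ≤ lyapunov f u v t :=
    le_add_of_nonneg_right (mul_nonneg (pow_nonneg (ht₀.le.trans (hs ht)) 3) hpot)
  exact Real.abs_le_sqrt (by linarith)

theorem exists_extension {T : ℝ} (hT : t₀ < T) (h : IsSystemSolutionOn f u v (Ico t₀ T)) :
    ∃ ε > 0, ∃ u₁ v₁ : ℝ → ℝ, EqOn u₁ u (Iio T) ∧ EqOn v₁ v (Iio T) ∧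
      IsSystemSolutionOn f u₁ v₁ (Ico t₀ (T + ε)) := by
  set C : ℝ := √(2 * lyapunov f u v t₀)
  have hu (t) (ht : t ∈ Ico t₀ T) : |u t| ≤ C :=
    h.abs_fst_le ht₀ hf hsign hanti Ico_subset_Ici_self (left_mem_Ico.2 hT) ht
  have hv' (t) (ht : t ∈ Ico t₀ T) : ‖u t / t ^ 2‖ ≤ C / t₀ ^ 2 := by
    rw [norm_div, Real.norm_eq_abs, Real.norm_of_nonneg (sq_nonneg t)]
    gcongr
    exacts [hu t ht, ht.1]
  have hv (t) (ht : t ∈ Ico t₀ T) : |v t| ≤ |v t₀| + C / t₀ ^ 2 * (T - t₀) :=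
    norm_le_of_norm_deriv_le h.hasDerivAt_snd hv' ht
  exact h.exists_extension_of_bounded ht₀.le hT (hf.mono (prod_mono_left Ioi_subset_Ici_self))
    (fun t ht ↦ (hu t ht).trans (le_max_left _ _)) fun t ht ↦ (hv t ht).trans (le_max_right _ _)

theorem tendsto_snd_zero_or_exists_tendsto (h : IsSystemSolutionOn f u v (Ici t₀)) :
    Tendsto v atTop (𝓝 0) ∨
      ∃ x₁ x₂ : ℝ, x₁ ≠ 0 ∧ Tendsto (fun t ↦ t * v t - (x₁ * t + x₂)) atTop (𝓝 0) := by
  have hu (t) (ht : t ∈ Ici t₀) : |u t| ≤ √(2 * lyapunov f u v t₀) :=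
    h.abs_fst_le ht₀ hf hsign hanti Subset.rfl self_mem_Ici ht
  obtain ⟨l, hl⟩ := h.exists_tendsto_snd ht₀ hu
  rcases eq_or_ne l 0 with rfl | hl0
  · exact .inl hl
  obtain ⟨U, hU⟩ := h.exists_tendsto_fst ht₀.le hsign hu hl hl0
  have hlim := tendsto_mul_sub_of_hasDerivAt_div_sq
    ((eventually_ge_atTop t₀).mono h.hasDerivAt_snd) hl hU
  refine .inr ⟨l, -U, hl0, ?_⟩
  exact (tendsto_sub_nhds_zero_iff.2 hlim).congr fun t ↦ by ring

end Lyapunov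

end IsSystemSolutionOn

namespace IsSolutionOn

variable {x x' : ℝ → ℝ}

theorem mono {t : Set ℝ} (h : IsSolutionOn f x x' s) (hts : t ⊆ s) : IsSolutionOn f x x' t :=
  ⟨fun r hr ↦ h.hasDerivAt r (hts hr), fun r hr ↦ h.hasDerivAt_deriv r (hts hr)⟩

theorem isSystemSolutionOn (h : IsSolutionOn f x x' s) (hs : 0 ∉ s) :
    IsSystemSolutionOn f (fun t ↦ t * x' t - x t) (fun t ↦ x t / t) s where
  hasDerivAt_fst t ht := by
    refine (((hasDerivAt_id' t).mul (h.hasDerivAt_deriv t ht)).sub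
      (h.hasDerivAt t ht)).congr_deriv ?_
    ring
  hasDerivAt_snd t ht := by
    refine ((h.hasDerivAt t ht).div (hasDerivAt_id' t)
      (ne_of_mem_of_not_mem ht hs)).congr_deriv ?_
    ring

variable {t₀ : ℝ} (ht₀ : 0 < t₀) (hf : ContinuousOn (Function.uncurry f) (Ici t₀ ×ˢ univ))
  (hsign : ∀ t ∈ Ici t₀, ∀ w ≠ 0, 0 ≤ w * f t w)
  (hanti : ∀ w, AntitoneOn (fun t ↦ t ^ 3 * potential f t w) (Ici t₀))

include ht₀ hf hsign hanti

theorem exists_extension {T : ℝ} (hT : t₀ < T) (h : IsSolutionOn f x x' (Ico t₀ T)) :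
    ∃ ε > 0, ∃ y y' : ℝ → ℝ, EqOn y x (Ico t₀ T) ∧ IsSolutionOn f y y' (Ico t₀ (T + ε)) := by
  have h0 (b : ℝ) : 0 ∉ Ico t₀ b := fun hmem ↦ hmem.1.not_gt ht₀
  obtain ⟨ε, hε, u, v, -, hv, hsol⟩ :=
    (h.isSystemSolutionOn (h0 T)).exists_extension ht₀ hf hsign hanti hT
  refine ⟨ε, hε, _, _, fun t ht ↦ ?_, hsol.isSolutionOn (h0 _)⟩
  simp only [hv ht.2]
  exact mul_div_cancel₀ (x t) (ne_of_mem_of_not_mem ht (h0 T))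

theorem isLittleO_or_exists_tendsto (h : IsSolutionOn f x x' (Ici t₀)) :
    x =o[atTop] (fun t ↦ t) ∨
      ∃ x₁ x₂ : ℝ, x₁ ≠ 0 ∧ Tendsto (fun t ↦ x t - (x₁ * t + x₂)) atTop (𝓝 0) := by
  have hne : ∀ᶠ t : ℝ in atTop, t ≠ 0 := eventually_ne_atTop 0
  refine ((h.isSystemSolutionOn ht₀.not_ge).tendsto_snd_zero_or_exists_tendsto ht₀ hf hsign
    hanti).imp (fun hlim ↦ ?_) fun ⟨x₁, x₂, hx₁, hlim⟩ ↦ ⟨x₁, x₂, hx₁, ?_⟩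
  · exact (isLittleO_iff_tendsto' (hne.mono fun t ht h0 ↦ absurd h0 ht)).2 hlim
  · exact hlim.congr' (hne.mono fun t ht ↦ by rw [mul_div_cancel₀ (x t) ht])

end IsSolutionOn

end System

theorem asymptotically_linear_solutions_via_Lyapunov_second_general
    (t₀ : ℝ) (ht₀ : 0 < t₀) (f : ℝ → ℝ → ℝ)
    (hf_cont : ContinuousOn (fun p : ℝ × ℝ => f p.1 p.2) (Set.Ici t₀ ×ˢ Set.univ))
    (hsign : ∀ t ∈ Set.Ici t₀, ∀ v : ℝ, v ≠ 0 → 0 ≤ v * f t v)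
    (hanti : ∀ w : ℝ, AntitoneOn (fun t => t ^ 3 * potential f t w) (Set.Ici t₀))
    (Tinf : EReal) (hT : (t₀ : EReal) < Tinf)
    (x x' x'' : ℝ → ℝ)
    (hx : ∀ t : ℝ, t₀ ≤ t → (t : EReal) < Tinf → HasDerivAt x (x' t) t)
    (hx' : ∀ t : ℝ, t₀ ≤ t → (t : EReal) < Tinf → HasDerivAt x' (x'' t) t)
    (heq : ∀ t : ℝ, t₀ ≤ t → (t : EReal) < Tinf → x'' t + f t (x t / t) = 0)
    (hmax : ∀ (y y' y'' : ℝ → ℝ) (T' : EReal), Tinf < T' →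
      (∀ t : ℝ, t₀ ≤ t → (t : EReal) < T' → HasDerivAt y (y' t) t) →
      (∀ t : ℝ, t₀ ≤ t → (t : EReal) < T' → HasDerivAt y' (y'' t) t) →
      (∀ t : ℝ, t₀ ≤ t → (t : EReal) < T' → y'' t + f t (y t / t) = 0) →
      ¬ (∀ t : ℝ, t₀ ≤ t → (t : EReal) < Tinf → y t = x t)) :
    Tinf = ⊤ ∧
      ((fun t => x t) =o[atTop] (fun t : ℝ => t) ∨
        ∃ x₁ x₂ : ℝ, x₁ ≠ 0 ∧
          Tendsto (fun t => x t - (x₁ * t + x₂)) atTop (nhds 0)) := by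
  have hsol : IsSolutionOn f x x' {t | t₀ ≤ t ∧ (t : EReal) < Tinf} :=
    ⟨fun t ht ↦ hx t ht.1 ht.2, fun t ht ↦
      (hx' t ht.1 ht.2).congr_deriv (eq_neg_of_add_eq_zero_left (heq t ht.1 ht.2))⟩
  have htop : Tinf = ⊤ := by
    induction Tinf with
    | bot => exact absurd hT not_lt_bot
    | top => rfl
    | coe T =>
      obtain ⟨ε, hε, y, y', hyx, hy⟩ := (hsol.mono fun t ht ↦ ⟨ht.1, EReal.coe_lt_coe ht.2⟩)
        |>.exists_extension ht₀ hf_cont hsign hanti (EReal.coe_lt_coe_iff.1 hT)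
      exact (hmax y y' (fun t ↦ -f t (y t / t)) (T + ε : ℝ) (EReal.coe_lt_coe (by linarith))
        (fun t h₀ hT' ↦ hy.hasDerivAt t ⟨h₀, EReal.coe_lt_coe_iff.1 hT'⟩)
        (fun t h₀ hT' ↦ hy.hasDerivAt_deriv t ⟨h₀, EReal.coe_lt_coe_iff.1 hT'⟩)
        (fun t _ _ ↦ neg_add_cancel _)
        fun t h₀ hT' ↦ hyx ⟨h₀, EReal.coe_lt_coe_iff.1 hT'⟩).elim
  subst htop
  exact ⟨rfl, (hsol.mono fun t ht ↦ ⟨ht, EReal.coe_lt_top t⟩).isLittleO_or_exists_tendsto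
    ht₀ hf_cont hsign hanti⟩

/-- Theorem 2: consider `x″ + f(t, x/t) = 0`, `t ≥ t₀ ≥ 1`, with `f` continuous,
`∂f/∂t` continuous, and `v·f(t,v) ≥ 0`, `v·[3f(t,v) + t·∂f/∂t(t,v)] ≤ 0` for all
`t ≥ t₀` and `v ≠ 0`.  Then every (maximal, i.e. non-extendable) solution `x` on
`[t₀, T∞)` is defined on all of `[t₀, ∞)` (i.e. `T∞ = ⊤`) and satisfies either
`x(t) = o(t)` or `x(t) = x₁t + x₂ + o(1)` with `x₁ ≠ 0`, as `t → +∞`. -/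
theorem asymptotically_linear_solutions_via_Lyapunov_second
    (t₀ : ℝ) (ht₀ : 1 ≤ t₀) (f ft : ℝ → ℝ → ℝ)
    (hf_cont : ContinuousOn (fun p : ℝ × ℝ => f p.1 p.2) (Set.Ici t₀ ×ˢ Set.univ))
    (hft : ∀ v : ℝ, ∀ t ∈ Set.Ici t₀,
      HasDerivWithinAt (fun s => f s v) (ft t v) (Set.Ici t₀) t)
    (hft_cont : ContinuousOn (fun p : ℝ × ℝ => ft p.1 p.2) (Set.Ici t₀ ×ˢ Set.univ))
    (hsign : ∀ t ∈ Set.Ici t₀, ∀ v : ℝ, v ≠ 0 → 0 ≤ v * f t v)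
    (hsign' : ∀ t ∈ Set.Ici t₀, ∀ v : ℝ, v ≠ 0 → v * (3 * f t v + t * ft t v) ≤ 0)
    (Tinf : EReal) (hT : (t₀ : EReal) < Tinf)
    (x x' x'' : ℝ → ℝ)
    (hx : ∀ t : ℝ, t₀ ≤ t → (t : EReal) < Tinf → HasDerivAt x (x' t) t)
    (hx' : ∀ t : ℝ, t₀ ≤ t → (t : EReal) < Tinf → HasDerivAt x' (x'' t) t)
    (heq : ∀ t : ℝ, t₀ ≤ t → (t : EReal) < Tinf → x'' t + f t (x t / t) = 0)
    (hmax : ∀ (y y' y'' : ℝ → ℝ) (T' : EReal), Tinf < T' →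
      (∀ t : ℝ, t₀ ≤ t → (t : EReal) < T' → HasDerivAt y (y' t) t) →
      (∀ t : ℝ, t₀ ≤ t → (t : EReal) < T' → HasDerivAt y' (y'' t) t) →
      (∀ t : ℝ, t₀ ≤ t → (t : EReal) < T' → y'' t + f t (y t / t) = 0) →
      ¬ (∀ t : ℝ, t₀ ≤ t → (t : EReal) < Tinf → y t = x t)) :
    Tinf = ⊤ ∧
      ((fun t => x t) =o[atTop] (fun t : ℝ => t) ∨
        ∃ x₁ x₂ : ℝ, x₁ ≠ 0 ∧
          Tendsto (fun t => x t - (x₁ * t + x₂)) atTop (nhds 0)) := by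
  have ht₀_pos : 0 < t₀ := zero_lt_one.trans_le ht₀
  exact asymptotically_linear_solutions_via_Lyapunov_second_general t₀ ht₀_pos f hf_cont hsign
    (antitoneOn_pow_three_mul_potential (convex_Ici t₀) (Ici_subset_Ici.2 ht₀_pos.le) hf_cont hft
      hsign') Tinf hT x x' x'' hx hx' heq hmax
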